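/- (Strict passivity of the distributed tire friction dynamics.) Let θ ≥ 0, Σ : ℝ² → M₂(ℝ) continuous, T > 0, v : [0,T] → ℝ² continuous, and let z be a classical solution on [0,T] of the tire PDE with input v. Suppose Assumption 1 holds with constant ω > 0 and Assumption 2 holds for Σ. Define the storage function V(t) := (1/2)∫₀¹ z(ξ,t)ᵀ Q(ξ) z(ξ,t) dξ and the output F(t) := (𝒦₁ z(·,t)). Then for every t ∈ [0,T], ∫₀ᵗ F(s)ᵀ v(s) ds ≥ V(t) − V(0) + ω ∫₀ᵗ ∫₀¹ ‖z(ξ,s)‖² dξ ds. -/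

import Mathlib

open MeasureTheory Matrix Set

noncomputable section

attribute [local instance] Matrix.normedAddCommGroup Matrix.normedSpace

abbrev Vec2 := Fin 2 → ℝ
abbrev Mat2 := Matrix (Fin 2) (Fin 2) ℝ

/-- Nondimensional pressure distribution `p̄(ξ) = (a/(1-e^{-a})) e^{-aξ}`. -/
def pbar (a ξ : ℝ) : ℝ := a / (1 - Real.exp (-a)) * Real.exp (-a * ξ)

/-- The physical parameters of the single-track tire model. -/
structure TireParams where
  vx : ℝ
  L1 : ℝ
  L2 : ℝ
  Fz1 : ℝ
  Fz2 : ℝ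
  σ1 : ℝ
  σ2 : ℝ
  a1 : ℝ
  a2 : ℝ
  φ1 : ℝ
  φ2 : ℝ
  vx_pos : 0 < vx
  L1_pos : 0 < L1
  L2_pos : 0 < L2
  Fz1_pos : 0 < Fz1
  Fz2_pos : 0 < Fz2
  σ1_pos : 0 < σ1
  σ2_pos : 0 < σ2
  a1_pos : 0 < a1
  a2_pos : 0 < a2
  φ1_mem : φ1 ∈ Set.Ioc (0:ℝ) 1
  φ2_mem : φ2 ∈ Set.Ioc (0:ℝ) 1

namespace TireParams

variable (P : TireParams)

def ψ1 : ℝ := 1 - P.φ1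
def ψ2 : ℝ := 1 - P.φ2

def Λmat : Mat2 := Matrix.diagonal ![P.vx / P.L1, P.vx / P.L2]

def Hmat : Mat2 := (2:ℝ) • Matrix.diagonal ![P.φ1, P.φ2]

def K1 (ξ : ℝ) : Mat2 :=
  Matrix.diagonal ![P.Fz1 * P.σ1 * pbar P.a1 ξ, P.Fz2 * P.σ2 * pbar P.a2 ξ]

def K2 (ξ : ℝ) : Mat2 :=
  -Matrix.diagonal ![P.ψ1 * pbar P.a1 ξ, P.ψ2 * pbar P.a2 ξ]

def K3 (ξ : ℝ) : Mat2 :=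
  -P.vx • Matrix.diagonal ![P.ψ1 / P.L1 * deriv (pbar P.a1) ξ, P.ψ2 / P.L2 * deriv (pbar P.a2) ξ]

def K4 : Mat2 :=
  P.vx • Matrix.diagonal ![P.ψ1 / P.L1 * pbar P.a1 1, P.ψ2 / P.L2 * pbar P.a2 1]

def Q (ξ : ℝ) : Mat2 := P.K1 ξ * (P.Hmat)⁻¹

/-- `(𝒦ζ) = ∫₀¹ K(ξ) ζ(ξ) dξ`. -/
def Kop (K : ℝ → Mat2) (ζ : ℝ → Vec2) : Vec2 := ∫ ξ in (0:ℝ)..1, (K ξ).mulVec (ζ ξ)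

def K1op (ζ : ℝ → Vec2) : Vec2 := Kop P.K1 ζ

def K2op (ζ : ℝ → Vec2) : Vec2 := Kop P.K2 ζ

/-- `(𝒦₃ζ) = ∫₀¹ K₃(ξ)ζ(ξ)dξ + K₄ ζ(1)`. -/
def K3op (ζ : ℝ → Vec2) : Vec2 := Kop P.K3 ζ + (P.K4).mulVec (ζ 1)

/-- `(𝒜ζ)(ξ) = -Λ ζ'(ξ) + (𝒦₃ζ)`, expressed through a given derivative `ζ'`. -/
def Aop (ζ ζ' : ℝ → Vec2) (ξ : ℝ) : Vec2 := -(P.Λmat).mulVec (ζ' ξ) + P.K3op ζ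

end TireParams

/-- `ζ` is C¹ on `[0,1]` with derivative `ζ'`. -/
def IsC1On01 (ζ ζ' : ℝ → Vec2) : Prop :=
  (∀ ξ ∈ Icc (0:ℝ) 1, HasDerivWithinAt ζ (ζ' ξ) (Icc (0:ℝ) 1) ξ) ∧
    ContinuousOn ζ' (Icc (0:ℝ) 1)

/-- Square integrability on `(0,1)`. -/
def SqIntegrableOn01 (ζ : ℝ → Vec2) : Prop :=
  Measurable ζ ∧ IntervalIntegrable (fun ξ => ∑ i, (ζ ξ i) ^ 2) volume 0 1

/-- Assumption 1 (strict dissipativity of `𝒜`). -/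
def Assumption1 (P : TireParams) (ω : ℝ) : Prop :=
  ∀ ζ ζ' : ℝ → Vec2, IsC1On01 ζ ζ' → ζ 0 = 0 →
    (∫ ξ in (0:ℝ)..1, P.Aop ζ ζ' ξ ⬝ᵥ (P.Q ξ).mulVec (ζ ξ)) ≤
      -ω * ∫ ξ in (0:ℝ)..1, ∑ i, (ζ ξ i) ^ 2

/-- Assumption 2 (dissipativity of the source `Σ`). -/
def Assumption2 (P : TireParams) (S : Vec2 → Mat2) : Prop :=
  ∀ y : Vec2, ∀ ζ : ℝ → Vec2, SqIntegrableOn01 ζ →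
    (∫ ξ in (0:ℝ)..1, ζ ξ ⬝ᵥ (P.Q ξ).mulVec ((S y).mulVec (ζ ξ + P.K2op ζ))) ≤ 0

/-- `z` (with partial derivatives `zξ`, `zt`) is a classical solution on `[0,T]` of the tire
PDE with input `v`: `∂z/∂t + Λ ∂z/∂ξ = θΣ(v(t))[z + 𝒦₂z] + 𝒦₃z + Hv(t)`, `z(0,t) = 0`. -/
def IsClassicalSolution (P : TireParams) (θ : ℝ) (S : Vec2 → Mat2) (T : ℝ)
    (v : ℝ → Vec2) (z zξ zt : ℝ → ℝ → Vec2) : Prop :=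
  (∀ t ∈ Icc (0:ℝ) T, ∀ ξ ∈ Icc (0:ℝ) 1,
      HasDerivWithinAt (fun s => z s t) (zξ ξ t) (Icc (0:ℝ) 1) ξ) ∧
  (∀ ξ ∈ Icc (0:ℝ) 1, ∀ t ∈ Icc (0:ℝ) T,
      HasDerivWithinAt (fun s => z ξ s) (zt ξ t) (Icc (0:ℝ) T) t) ∧
  ContinuousOn (fun p : ℝ × ℝ => z p.1 p.2) (Icc (0:ℝ) 1 ×ˢ Icc (0:ℝ) T) ∧
  ContinuousOn (fun p : ℝ × ℝ => zξ p.1 p.2) (Icc (0:ℝ) 1 ×ˢ Icc (0:ℝ) T) ∧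
  ContinuousOn (fun p : ℝ × ℝ => zt p.1 p.2) (Icc (0:ℝ) 1 ×ˢ Icc (0:ℝ) T) ∧
  (∀ ξ ∈ Ioo (0:ℝ) 1, ∀ t ∈ Ioo (0:ℝ) T,
      zt ξ t + (P.Λmat).mulVec (zξ ξ t) =
        θ • (S (v t)).mulVec (z ξ t + P.K2op (fun s => z s t)) +
          P.K3op (fun s => z s t) + (P.Hmat).mulVec (v t)) ∧
  (∀ t ∈ Icc (0:ℝ) T, z 0 t = 0)

/-- The storage function `V(t) = ½∫₀¹ z(ξ,t)ᵀ Q(ξ) z(ξ,t) dξ`. -/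
def storage (P : TireParams) (z : ℝ → ℝ → Vec2) (t : ℝ) : ℝ :=
  (1/2) * ∫ ξ in (0:ℝ)..1, z ξ t ⬝ᵥ (P.Q ξ).mulVec (z ξ t)

/-- The output `F(t) = (𝒦₁ z(·,t))`. -/
def outputF (P : TireParams) (z : ℝ → ℝ → Vec2) (t : ℝ) : Vec2 :=
  P.K1op (fun s => z s t)

/-!
Differentiating under the integral, and using that `Q` is symmetric, `V̇ = ∫₀¹ zₜᵀ Q z dξ`.
Substituting `zₜ = 𝒜z + θ Σ(v) (z + 𝒦₂z) + H v` splits this into three terms: the first is at most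
`-ω ∫₀¹ ‖z‖² dξ` by Assumption 1, the second is nonpositive by Assumption 2, and the third equals
`Fᵀ v` because `Q H = K₁`. Integrating `V̇ ≤ Fᵀ v - ω ∫₀¹ ‖z‖² dξ` over `[0, t]` gives the claim.
-/

section DotProduct

variable {X m n R 𝕜 : Type*} [Fintype n]

lemma continuousOn_dotProduct [TopologicalSpace X] [NonUnitalNonAssocSemiring R]
    [TopologicalSpace R] [IsTopologicalSemiring R] {s : Set X} {f g : X → n → R}
    (hf : ContinuousOn f s) (hg : ContinuousOn g s) : ContinuousOn (fun x => f x ⬝ᵥ g x) s :=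
  continuousOn_iff_continuous_domRestrict.2 (hf.domRestrict.dotProduct hg.domRestrict)

lemma continuousOn_mulVec [TopologicalSpace X] [NonUnitalNonAssocSemiring R]
    [TopologicalSpace R] [IsTopologicalSemiring R] {s : Set X} {A : X → Matrix m n R}
    {f : X → n → R} (hA : ContinuousOn A s) (hf : ContinuousOn f s) :
    ContinuousOn (fun x => A x *ᵥ f x) s :=
  continuousOn_iff_continuous_domRestrict.2 (hA.domRestrict.matrix_mulVec hf.domRestrict)

lemma dotProduct_mulVec_comm_of_isSymm [CommSemiring R] {A : Matrix n n R} (hA : A.IsSymm)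
    (x y : n → R) : x ⬝ᵥ A *ᵥ y = y ⬝ᵥ A *ᵥ x := by
  simpa only [hA.eq] using dotProduct_transpose_mulVec A x y

variable [NontriviallyNormedField 𝕜] {s : Set 𝕜} {t : 𝕜}

lemma hasDerivWithinAt_dotProduct {f g : 𝕜 → n → 𝕜} {f' g' : n → 𝕜}
    (hf : HasDerivWithinAt f f' s t) (hg : HasDerivWithinAt g g' s t) :
    HasDerivWithinAt (fun t => f t ⬝ᵥ g t) (f' ⬝ᵥ g t + f t ⬝ᵥ g') s t := by
  rw [hasDerivWithinAt_pi] at hf hg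
  refine (HasDerivWithinAt.fun_sum (u := Finset.univ) fun i _ => (hf i).mul (hg i)).congr_deriv ?_
  exact Finset.sum_add_distrib

lemma hasDerivWithinAt_dotProduct_mulVec_self {A : Matrix n n 𝕜} (hA : A.IsSymm)
    {f : 𝕜 → n → 𝕜} {f' : n → 𝕜} (hf : HasDerivWithinAt f f' s t) :
    HasDerivWithinAt (fun t => f t ⬝ᵥ A *ᵥ f t) (2 * (f' ⬝ᵥ A *ᵥ f t)) s t := by
  have hAf : HasDerivWithinAt (fun t => A *ᵥ f t) (A *ᵥ f') s t :=
    hasDerivWithinAt_pi.2 fun i =>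
      (hasDerivWithinAt_dotProduct (hasDerivWithinAt_const t s (A i)) hf).congr_deriv <| by
        rw [zero_dotProduct, zero_add, mulVec]
  refine (hasDerivWithinAt_dotProduct hf hAf).congr_deriv ?_
  rw [dotProduct_mulVec_comm_of_isSymm hA (f t) f', two_mul]

end DotProduct

section IntegralDotProduct

variable {n 𝕜 : Type*} [Fintype n] [RCLike 𝕜] {μ : Measure ℝ} {a b : ℝ}

lemma intervalIntegral_dotProduct_const {f : ℝ → n → 𝕜} (hf : IntervalIntegrable f μ a b)
    (y : n → 𝕜) : (∫ x in a..b, f x ∂μ) ⬝ᵥ y = ∫ x in a..b, f x ⬝ᵥ y ∂μ :=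
  (((dotProductBilin 𝕜 𝕜).flip y).toContinuousLinearMap.intervalIntegral_comp_comm hf).symm

lemma intervalIntegrable_dotProduct_of_continuousOn {f g : ℝ → n → 𝕜}
    (hf : ContinuousOn f (uIcc a b)) (hg : IntervalIntegrable g μ a b) :
    IntervalIntegrable (fun x => f x ⬝ᵥ g x) μ a b := by
  refine (IntervalIntegrable.sum Finset.univ fun i _ => ?_).congr fun x _ => Finset.sum_apply _ _ _
  have hgi : IntervalIntegrable (fun x => g x i) μ a b := ⟨hg.1.eval i, hg.2.eval i⟩
  exact hgi.continuousOn_mul (continuousOn_pi.1 hf i)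

end IntegralDotProduct

section ParametricIntegral

variable {E : Type*} [NormedAddCommGroup E] [NormedSpace ℝ E]
  {μ : Measure ℝ} [IsLocallyFiniteMeasure μ] {a b : ℝ}

lemma continuousOn_slice {X Y Z : Type*} [TopologicalSpace X] [TopologicalSpace Y]
    [TopologicalSpace Z] {f : X → Y → Z} {s : Set X} {t : Set Y}
    (hf : ContinuousOn (fun p : X × Y => f p.1 p.2) (s ×ˢ t)) {y : Y} (hy : y ∈ t) :
    ContinuousOn (fun x => f x y) s :=
  hf.comp (by fun_prop : ContinuousOn (fun x => (x, y)) s) fun _ hx => ⟨hx, hy⟩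

lemma continuousOn_intervalIntegral_of_continuousOn_prod {X : Type*} [TopologicalSpace X]
    [FirstCountableTopology X] {s : Set X} (hs : IsCompact s) {f : ℝ → X → E}
    (hf : ContinuousOn (fun p : ℝ × X => f p.1 p.2) (uIcc a b ×ˢ s)) :
    ContinuousOn (fun t => ∫ x in a..b, f x t ∂μ) s := by
  obtain ⟨C, hC⟩ := (isCompact_uIcc.prod hs).exists_bound_of_continuousOn hf
  intro t ht
  refine intervalIntegral.continuousWithinAt_of_dominated_interval (bound := fun _ => C) ?_ ?_
    intervalIntegrable_const ?_
  · filter_upwards [self_mem_nhdsWithin] with r hr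
    exact (continuousOn_slice hf hr).intervalIntegrable.aestronglyMeasurable_restrict_uIoc
  · filter_upwards [self_mem_nhdsWithin] with r hr
    exact .of_forall fun x hx => hC (x, r) ⟨uIoc_subset_uIcc hx, hr⟩
  · refine .of_forall fun x hx => ?_
    exact (hf.comp (f := fun r => (x, r)) (by fun_prop)
      fun r hr => ⟨uIoc_subset_uIcc hx, hr⟩) t ht

lemma hasDerivAt_intervalIntegral_of_continuousOn_prod {𝕜 : Type*} [RCLike 𝕜]
    [NormedSpace 𝕜 E] {f f' : ℝ → 𝕜 → E} {s : Set 𝕜} (hs : IsCompact s) {t : 𝕜} (hst : s ∈ nhds t)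
    (hf : ContinuousOn (fun p : ℝ × 𝕜 => f p.1 p.2) (uIcc a b ×ˢ s))
    (hf' : ContinuousOn (fun p : ℝ × 𝕜 => f' p.1 p.2) (uIcc a b ×ˢ s))
    (hderiv : ∀ x ∈ uIcc a b, ∀ r ∈ s, HasDerivWithinAt (f x) (f' x r) s r) :
    HasDerivAt (fun r => ∫ x in a..b, f x r ∂μ) (∫ x in a..b, f' x t ∂μ) t := by
  obtain ⟨C, hC⟩ := (isCompact_uIcc.prod hs).exists_bound_of_continuousOn hf'
  have ht : t ∈ s := mem_of_mem_nhds hst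
  refine (intervalIntegral.hasDerivAt_integral_of_dominated_loc_of_deriv_le
    (F := fun r x => f x r) (F' := fun r x => f' x r) (bound := fun _ => C)
    (interior_mem_nhds.2 hst) ?_ (continuousOn_slice hf ht).intervalIntegrable
    (continuousOn_slice hf' ht).intervalIntegrable.aestronglyMeasurable_restrict_uIoc
    (.of_forall fun x hx r hr => hC (x, r) ⟨uIoc_subset_uIcc hx, interior_subset hr⟩)
    intervalIntegrable_const (.of_forall fun x hx r hr => ?_)).2
  · filter_upwards [hst] with r hr
    exact (continuousOn_slice hf hr).intervalIntegrable.aestronglyMeasurable_restrict_uIoc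
  · exact (hderiv x (uIoc_subset_uIcc hx) r (interior_subset hr)).hasDerivAt
      (mem_interior_iff_mem_nhds.1 hr)

end ParametricIntegral

lemma continuous_pbar (a : ℝ) : Continuous (pbar a) := by
  unfold pbar
  fun_prop

namespace TireParams

variable (P : TireParams)

lemma continuous_K1 : Continuous P.K1 := by
  have h1 := continuous_pbar P.a1
  have h2 := continuous_pbar P.a2
  exact Continuous.matrix_diagonal (by fun_prop)

lemma continuous_Q : Continuous P.Q :=
  P.continuous_K1.matrix_mul continuous_const

lemma isSymm_K1 (ξ : ℝ) : (P.K1 ξ).IsSymm :=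
  isSymm_diagonal _

lemma isSymm_Q (ξ : ℝ) : (P.Q ξ).IsSymm := by
  unfold Q K1 Hmat
  rw [← diagonal_smul, inv_diagonal, diagonal_mul_diagonal]
  exact isSymm_diagonal _

lemma isUnit_det_Hmat : IsUnit P.Hmat.det := by
  have h1 := P.φ1_mem.1.ne'
  have h2 := P.φ2_mem.1.ne'
  simp [Hmat, h1, h2]

lemma Q_mul_Hmat (ξ : ℝ) : P.Q ξ * P.Hmat = P.K1 ξ :=
  nonsing_inv_mul_cancel_right _ _ P.isUnit_det_Hmat

lemma Hmat_mulVec_dotProduct_Q_mulVec (ξ : ℝ) (x y : Vec2) :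
    P.Hmat *ᵥ y ⬝ᵥ P.Q ξ *ᵥ x = P.K1 ξ *ᵥ x ⬝ᵥ y := by
  rw [dotProduct_mulVec_comm_of_isSymm (P.isSymm_Q ξ), mulVec_mulVec, Q_mul_Hmat,
    dotProduct_mulVec_comm_of_isSymm (P.isSymm_K1 ξ), dotProduct_comm]

lemma Kop_congr {K : ℝ → Mat2} {ζ η : ℝ → Vec2} (h : EqOn ζ η (Icc 0 1)) :
    Kop K ζ = Kop K η := by
  refine intervalIntegral.integral_congr fun ξ hξ => ?_
  rw [uIcc_of_le zero_le_one] at hξ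
  simp only [h hξ]

lemma K1op_dotProduct {ζ : ℝ → Vec2} (hζ : ContinuousOn ζ (Icc 0 1)) (y : Vec2) :
    P.K1op ζ ⬝ᵥ y = ∫ ξ in (0 : ℝ)..1, P.K1 ξ *ᵥ ζ ξ ⬝ᵥ y :=
  intervalIntegral_dotProduct_const ((continuousOn_mulVec P.continuous_K1.continuousOn
    hζ).intervalIntegrable_of_Icc zero_le_one) y

end TireParams

lemma IsC1On01.continuousOn {ζ ζ' : ℝ → Vec2} (hζ : IsC1On01 ζ ζ') : ContinuousOn ζ (Icc 0 1) :=
  fun ξ hξ => (hζ.1 ξ hξ).continuousWithinAt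

lemma Assumption2.integral_nonpos_of_continuousOn {P : TireParams} {S : Vec2 → Mat2}
    (h2 : Assumption2 P S) (y : Vec2) {ζ : ℝ → Vec2} (hζ : ContinuousOn ζ (Icc 0 1)) :
    (∫ ξ in (0 : ℝ)..1, ζ ξ ⬝ᵥ P.Q ξ *ᵥ S y *ᵥ (ζ ξ + P.K2op ζ)) ≤ 0 := by
  classical
  -- `Assumption2` asks for global measurability, so `ζ` is replaced by `0` outside `[0, 1]`.
  have heq : EqOn ((Icc 0 1).piecewise ζ 0) ζ (Icc 0 1) := piecewise_eqOn _ _ _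
  have hmeas : Measurable ((Icc 0 1).piecewise ζ 0) :=
    hζ.measurable_piecewise continuousOn_const measurableSet_Icc
  have hsq : ContinuousOn (fun ξ => ∑ i, ((Icc 0 1).piecewise ζ 0 ξ i) ^ 2) (Icc 0 1) := by
    have := continuousOn_pi.1 (hζ.congr heq)
    fun_prop
  refine le_of_eq_of_le (intervalIntegral.integral_congr fun ξ hξ => ?_)
    (h2 y _ ⟨hmeas, hsq.intervalIntegrable_of_Icc zero_le_one⟩)
  rw [uIcc_of_le zero_le_one] at hξ
  simp only [TireParams.K2op, heq hξ, TireParams.Kop_congr heq]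

section FixedTime

variable {P : TireParams} {θ ω : ℝ} {S : Vec2 → Mat2} {ζ ζ' w : ℝ → Vec2} {y : Vec2}

lemma dotProduct_Q_mulVec_eq_of_pde {ξ : ℝ}
    (pde : w ξ + P.Λmat *ᵥ ζ' ξ =
      θ • S y *ᵥ (ζ ξ + P.K2op ζ) + P.K3op ζ + P.Hmat *ᵥ y) :
    w ξ ⬝ᵥ P.Q ξ *ᵥ ζ ξ =
      P.Aop ζ ζ' ξ ⬝ᵥ P.Q ξ *ᵥ ζ ξ + θ * (ζ ξ ⬝ᵥ P.Q ξ *ᵥ S y *ᵥ (ζ ξ + P.K2op ζ)) +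
        P.K1 ξ *ᵥ ζ ξ ⬝ᵥ y := by
  have hw : w ξ = P.Aop ζ ζ' ξ + θ • S y *ᵥ (ζ ξ + P.K2op ζ) + P.Hmat *ᵥ y := by
    rw [eq_sub_of_add_eq pde, TireParams.Aop]
    abel
  rw [hw, add_dotProduct, add_dotProduct, smul_dotProduct, smul_eq_mul,
    P.Hmat_mulVec_dotProduct_Q_mulVec, dotProduct_mulVec_comm_of_isSymm (P.isSymm_Q ξ) (ζ ξ)]

theorem integral_dotProduct_Q_mulVec_le_of_pde (h1 : Assumption1 P ω) (h2 : Assumption2 P S)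
    (hθ : 0 ≤ θ) (hζ : IsC1On01 ζ ζ') (hζ0 : ζ 0 = 0)
    (pde : ∀ ξ ∈ Ioo (0 : ℝ) 1, w ξ + P.Λmat *ᵥ ζ' ξ =
      θ • S y *ᵥ (ζ ξ + P.K2op ζ) + P.K3op ζ + P.Hmat *ᵥ y) :
    (∫ ξ in (0 : ℝ)..1, w ξ ⬝ᵥ P.Q ξ *ᵥ ζ ξ) ≤
      P.K1op ζ ⬝ᵥ y - ω * ∫ ξ in (0 : ℝ)..1, ∑ i, (ζ ξ i) ^ 2 := by
  have hc := hζ.continuousOn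
  have hQ := P.continuous_Q.continuousOn (s := Icc 0 1)
  have hA : IntervalIntegrable (fun ξ => P.Aop ζ ζ' ξ ⬝ᵥ P.Q ξ *ᵥ ζ ξ) volume 0 1 :=
    (continuousOn_dotProduct
      ((continuousOn_mulVec continuousOn_const hζ.2).neg.add continuousOn_const)
      (continuousOn_mulVec hQ hc)).intervalIntegrable_of_Icc zero_le_one
  have hS : IntervalIntegrable
      (fun ξ => θ * (ζ ξ ⬝ᵥ P.Q ξ *ᵥ S y *ᵥ (ζ ξ + P.K2op ζ))) volume 0 1 :=
    ((continuousOn_dotProduct hc (continuousOn_mulVec hQ (continuousOn_mulVec continuousOn_const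
      (hc.add continuousOn_const)))).intervalIntegrable_of_Icc zero_le_one).const_mul θ
  have hF : IntervalIntegrable (fun ξ => P.K1 ξ *ᵥ ζ ξ ⬝ᵥ y) volume 0 1 :=
    (continuousOn_dotProduct (continuousOn_mulVec P.continuous_K1.continuousOn hc)
      continuousOn_const).intervalIntegrable_of_Icc zero_le_one
  calc (∫ ξ in (0 : ℝ)..1, w ξ ⬝ᵥ P.Q ξ *ᵥ ζ ξ)
      = ∫ ξ in (0 : ℝ)..1, (P.Aop ζ ζ' ξ ⬝ᵥ P.Q ξ *ᵥ ζ ξ +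
          θ * (ζ ξ ⬝ᵥ P.Q ξ *ᵥ S y *ᵥ (ζ ξ + P.K2op ζ)) + P.K1 ξ *ᵥ ζ ξ ⬝ᵥ y) :=
        intervalIntegral.integral_congr_Ioo_of_le zero_le_one
          fun ξ hξ => dotProduct_Q_mulVec_eq_of_pde (pde ξ hξ)
    _ = (∫ ξ in (0 : ℝ)..1, P.Aop ζ ζ' ξ ⬝ᵥ P.Q ξ *ᵥ ζ ξ) +
          θ * (∫ ξ in (0 : ℝ)..1, ζ ξ ⬝ᵥ P.Q ξ *ᵥ S y *ᵥ (ζ ξ + P.K2op ζ)) + P.K1op ζ ⬝ᵥ y := by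
        rw [intervalIntegral.integral_add (hA.add hS) hF, intervalIntegral.integral_add hA hS,
          intervalIntegral.integral_const_mul, P.K1op_dotProduct hc]
    _ ≤ P.K1op ζ ⬝ᵥ y - ω * ∫ ξ in (0 : ℝ)..1, ∑ i, (ζ ξ i) ^ 2 := by
        linarith [h1 ζ ζ' hζ hζ0,
          mul_nonpos_of_nonneg_of_nonpos hθ (h2.integral_nonpos_of_continuousOn y hc)]

end FixedTime

/-- The rate of change `V̇(t) = ∫₀¹ zₜ(ξ,t)ᵀ Q(ξ) z(ξ,t) dξ` of the storage function, expressed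
through a given time derivative `zt`. -/
def storageRate (P : TireParams) (z zt : ℝ → ℝ → Vec2) (t : ℝ) : ℝ :=
  ∫ ξ in (0 : ℝ)..1, zt ξ t ⬝ᵥ P.Q ξ *ᵥ z ξ t

namespace IsClassicalSolution

variable {P : TireParams} {θ ω T t : ℝ} {S : Vec2 → Mat2} {v : ℝ → Vec2} {z zξ zt : ℝ → ℝ → Vec2}

lemma isC1On01 (hz : IsClassicalSolution P θ S T v z zξ zt) (ht : t ∈ Icc 0 T) :
    IsC1On01 (fun ξ => z ξ t) (fun ξ => zξ ξ t) :=
  let ⟨hderiv, _, _, hzξ, _⟩ := hz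
  ⟨hderiv t ht, continuousOn_slice hzξ ht⟩

lemma continuousOn_state (hz : IsClassicalSolution P θ S T v z zξ zt) :
    ContinuousOn (fun p : ℝ × ℝ => z p.1 p.2) (uIcc 0 1 ×ˢ Icc 0 T) := by
  have ⟨_, _, hz_cont, _⟩ := hz
  rwa [uIcc_of_le zero_le_one]

lemma continuousOn_storageDensity (hz : IsClassicalSolution P θ S T v z zξ zt) :
    ContinuousOn (fun p : ℝ × ℝ => z p.1 p.2 ⬝ᵥ P.Q p.1 *ᵥ z p.1 p.2) (uIcc 0 1 ×ˢ Icc 0 T) :=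
  continuousOn_dotProduct hz.continuousOn_state
    (continuousOn_mulVec (P.continuous_Q.comp continuous_fst).continuousOn hz.continuousOn_state)

lemma continuousOn_storage (hz : IsClassicalSolution P θ S T v z zξ zt) :
    ContinuousOn (storage P z) (Icc 0 T) :=
  continuousOn_const.mul <| continuousOn_intervalIntegral_of_continuousOn_prod isCompact_Icc
    hz.continuousOn_storageDensity

lemma continuousOn_outputF (hz : IsClassicalSolution P θ S T v z zξ zt) :
    ContinuousOn (outputF P z) (Icc 0 T) :=
  continuousOn_intervalIntegral_of_continuousOn_prod isCompact_Icc
    (continuousOn_mulVec (P.continuous_K1.comp continuous_fst).continuousOn hz.continuousOn_state)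

lemma continuousOn_integral_sum_sq (hz : IsClassicalSolution P θ S T v z zξ zt) :
    ContinuousOn (fun t => ∫ ξ in (0 : ℝ)..1, ∑ i, (z ξ t i) ^ 2) (Icc 0 T) := by
  have hzi := continuousOn_pi.1 hz.continuousOn_state
  exact continuousOn_intervalIntegral_of_continuousOn_prod isCompact_Icc
    (f := fun ξ t => ∑ i, (z ξ t i) ^ 2) (by fun_prop)

lemma hasDerivAt_storage (hz : IsClassicalSolution P θ S T v z zξ zt) (ht : t ∈ Ioo 0 T) :
    HasDerivAt (storage P z) (storageRate P z zt t) t := by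
  have ⟨_, hz_deriv, _, _, hzt_cont, _⟩ := hz
  have hzt : ContinuousOn (fun p : ℝ × ℝ => zt p.1 p.2) (uIcc 0 1 ×ˢ Icc 0 T) := by
    rwa [uIcc_of_le zero_le_one]
  have hrate : ContinuousOn (fun p : ℝ × ℝ => 2 * (zt p.1 p.2 ⬝ᵥ P.Q p.1 *ᵥ z p.1 p.2))
      (uIcc 0 1 ×ˢ Icc 0 T) :=
    continuousOn_const.mul (continuousOn_dotProduct hzt (continuousOn_mulVec
      (P.continuous_Q.comp continuous_fst).continuousOn hz.continuousOn_state))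
  have hderiv : ∀ ξ ∈ uIcc (0 : ℝ) 1, ∀ r ∈ Icc 0 T, HasDerivWithinAt
      (fun r => z ξ r ⬝ᵥ P.Q ξ *ᵥ z ξ r) (2 * (zt ξ r ⬝ᵥ P.Q ξ *ᵥ z ξ r)) (Icc 0 T) r := by
    rw [uIcc_of_le zero_le_one]
    exact fun ξ hξ r hr =>
      hasDerivWithinAt_dotProduct_mulVec_self (P.isSymm_Q ξ) (hz_deriv ξ hξ r hr)
  refine ((hasDerivAt_intervalIntegral_of_continuousOn_prod isCompact_Icc
    (Icc_mem_nhds ht.1 ht.2) hz.continuousOn_storageDensity hrate hderiv).const_mul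
    (1 / 2)).congr_deriv ?_
  rw [intervalIntegral.integral_const_mul, storageRate]
  ring

theorem storageRate_le (hz : IsClassicalSolution P θ S T v z zξ zt) (hθ : 0 ≤ θ)
    (h1 : Assumption1 P ω) (h2 : Assumption2 P S) (ht : t ∈ Ioo 0 T) :
    storageRate P z zt t ≤
      outputF P z t ⬝ᵥ v t - ω * ∫ ξ in (0 : ℝ)..1, ∑ i, (z ξ t i) ^ 2 :=
  let ⟨_, _, _, _, _, pde, hz0⟩ := hz
  have htT := Ioo_subset_Icc_self ht
  integral_dotProduct_Q_mulVec_le_of_pde h1 h2 hθ (hz.isC1On01 htT) (hz0 t htT)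
    fun ξ hξ => pde ξ hξ t ht

end IsClassicalSolution

theorem statement3_general (P : TireParams) (θ : ℝ) (hθ : 0 ≤ θ) (S : Vec2 → Mat2)
    (T : ℝ) (v : ℝ → Vec2) (hv : IntervalIntegrable v volume 0 T)
    (z zξ zt : ℝ → ℝ → Vec2) (hz : IsClassicalSolution P θ S T v z zξ zt)
    (ω : ℝ) (h1 : Assumption1 P ω) (h2 : Assumption2 P S) :
    ∀ t ∈ Icc (0 : ℝ) T,
      (∫ s in (0 : ℝ)..t, outputF P z s ⬝ᵥ v s) ≥
        storage P z t - storage P z 0 +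
          ω * ∫ s in (0 : ℝ)..t, ∫ ξ in (0 : ℝ)..1, ∑ i, (z ξ s i) ^ 2 := by
  intro t ht
  have hsub : Icc 0 t ⊆ Icc 0 T := Icc_subset_Icc_right ht.2
  have hsupply : IntervalIntegrable (fun s => outputF P z s ⬝ᵥ v s) volume 0 t :=
    intervalIntegrable_dotProduct_of_continuousOn
      (uIcc_of_le ht.1 ▸ hz.continuousOn_outputF.mono hsub)
      (hv.mono_set (uIcc_subset_uIcc_left (uIcc_of_le (ht.1.trans ht.2) ▸ ht)))
  have hnorm : IntervalIntegrable
      (fun s => ω * ∫ ξ in (0 : ℝ)..1, ∑ i, (z ξ s i) ^ 2) volume 0 t :=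
    ((hz.continuousOn_integral_sum_sq.mono hsub).intervalIntegrable_of_Icc ht.1).const_mul ω
  have hbalance := intervalIntegral.sub_le_integral_of_hasDeriv_right_of_le ht.1
    (hz.continuousOn_storage.mono hsub)
    (fun s hs => (hz.hasDerivAt_storage ⟨hs.1, hs.2.trans_le ht.2⟩).hasDerivWithinAt)
    ((intervalIntegrable_iff_integrableOn_Icc_of_le ht.1).1 (hsupply.sub hnorm))
    (fun s hs => hz.storageRate_le hθ h1 h2 ⟨hs.1, hs.2.trans_le ht.2⟩)
  rw [intervalIntegral.integral_sub hsupply hnorm,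
    intervalIntegral.integral_const_mul] at hbalance
  linarith

/-- strict passivity of the distributed tire friction dynamics:
`∫₀ᵗ F(s)ᵀv(s) ds ≥ V(t) − V(0) + ω ∫₀ᵗ∫₀¹ ‖z(ξ,s)‖² dξ ds` for every `t ∈ [0,T]`. -/
theorem statement3 (P : TireParams) (θ : ℝ) (hθ : 0 ≤ θ)
    (S : Vec2 → Mat2) (hS : Continuous S)
    (T : ℝ) (hT : 0 < T) (v : ℝ → Vec2) (hv : ContinuousOn v (Icc (0:ℝ) T))
    (z zξ zt : ℝ → ℝ → Vec2) (hz : IsClassicalSolution P θ S T v z zξ zt)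
    (ω : ℝ) (hω : 0 < ω) (h1 : Assumption1 P ω) (h2 : Assumption2 P S) :
    ∀ t ∈ Icc (0:ℝ) T,
      (∫ s in (0:ℝ)..t, outputF P z s ⬝ᵥ v s) ≥
        storage P z t - storage P z 0 +
          ω * ∫ s in (0:ℝ)..t, ∫ ξ in (0:ℝ)..1, ∑ i, (z ξ s i) ^ 2 :=
  statement3_general P θ hθ S T v (hv.intervalIntegrable_of_Icc hT.le) z zξ zt hz ω h1 h2
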